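/- arXiv:1411.1826 — 3 statements merged into one kernel-verified Lean document; each statement's English description precedes it below -/
import Mathlib

section
/- Let Ω be an open bounded convex set in ℝⁿ. Two distinct points α and β in ∂Ω lie in the relative interior of the same face of the closure of Ω if and only if there exists an open line segment S contained in ∂Ω with α, β ∈ S. -/
/-!
If `α, β` lie in the relative interior of a face `F`, the segment `[α, β]` can be prolonged within
`F` past both ends, giving `p, q ∈ closure Ω` with `α, β` in the open segment `(p, q)`. A
supporting functional of `Ω` at `α` attains its maximum over `[p, q]` at `α`, hence is constant
there, so no point of `(p, q)` belongs to `Ω`.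

Conversely, given an open segment in `∂Ω` containing `α` and `β`, take for `F` the minimal face
`minFace (closure Ω) α`: the points from which `α` can be reached and strictly overshot within
the closure. It contains the open segment. In a convex set, the open segment from a relative interior
point to any point of the set consists of relative interior points (`openSegment_mem_relint`). Applied to any relative interior point of `F`, this
shows that `α` is relatively interior; applied to `α`, it shows that `β` is.
-/

open Set
open scoped LinearAlgebra.Projectivization
open scoped Classical

noncomputable section

abbrev Euc (n : ℕ) := EuclideanSpace ℝ (Fin n)

/-- `α` and `β` are the two points where the straight line through `x` and `y`
meets the boundary of `Ω`, labeled so that `|α−x| < |α−y|` and `|β−y| < |β−x|`. -/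
def IsHilbertPair {n : ℕ} (Ω : Set (Euc n)) (x y α β : Euc n) : Prop :=
  α ∈ frontier Ω ∧ β ∈ frontier Ω ∧
    Collinear ℝ ({α, x, y} : Set (Euc n)) ∧ Collinear ℝ ({β, x, y} : Set (Euc n)) ∧
    dist α x < dist α y ∧ dist β y < dist β x

/-- The Hilbert metric of `Ω`: `d_Ω(x,y) = ln((|α−y|/|α−x|)·(|β−x|/|β−y|))` for `x ≠ y`
(where `α, β` are as in `IsHilbertPair`; for `x ≠ y` in a convex domain `Ω` such a pair
exists and is unique), and `d_Ω(x,x) = 0` (no such pair exists when `x = y`). -/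
def hilbertDist {n : ℕ} (Ω : Set (Euc n)) (x y : Euc n) : ℝ :=
  if h : ∃ p : Euc n × Euc n, IsHilbertPair Ω x y p.1 p.2 then
    Real.log ((dist h.choose.1 y / dist h.choose.1 x) * (dist h.choose.2 x / dist h.choose.2 y))
  else 0

/-- An isometry of Hilbert geometries: a surjective distance preserving map. -/
def IsHilbertIsometry {n : ℕ} (Ω Ω' : Set (Euc n)) (τ : Euc n → Euc n) : Prop :=
  Set.MapsTo τ Ω Ω' ∧ Set.SurjOn τ Ω Ω' ∧
    ∀ x ∈ Ω, ∀ y ∈ Ω, hilbertDist Ω' (τ x) (τ y) = hilbertDist Ω x y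

/-- The standard affine chart `ℝⁿ → ℝPⁿ`, `x ↦ [x : 1]`. -/
def chart {n : ℕ} (x : Euc n) : Projectivization ℝ (Fin (n + 1) → ℝ) :=
  Projectivization.mk ℝ ((Fin.snoc (fun i => x i) 1 : Fin (n + 1) → ℝ))
    (fun h => one_ne_zero (α := ℝ) (by simpa using congrFun h (Fin.last n)))

/-- The projective transformation of `ℝPⁿ` induced by an element of `GL_{n+1}(ℝ)`
(every element of `PGL_{n+1}(ℝ)` arises this way). -/
def projMap {n : ℕ} (g : (Fin (n + 1) → ℝ) ≃ₗ[ℝ] (Fin (n + 1) → ℝ)) :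
    Projectivization ℝ (Fin (n + 1) → ℝ) → Projectivization ℝ (Fin (n + 1) → ℝ) :=
  Projectivization.map (g : (Fin (n + 1) → ℝ) →ₗ[ℝ] (Fin (n + 1) → ℝ)) g.injective

/-- `τ` agrees on `Ω` with (the restriction of) a projective transformation of `ℝPⁿ`. -/
def IsProjectiveOn {n : ℕ} (Ω : Set (Euc n)) (τ : Euc n → Euc n) : Prop :=
  ∃ g : (Fin (n + 1) → ℝ) ≃ₗ[ℝ] (Fin (n + 1) → ℝ),
    ∀ x ∈ Ω, chart (τ x) = projMap g (chart x)

/-- A ray in `Ω`: the intersection with `Ω` of a Euclidean ray starting at a point of `Ω`. -/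
def IsRayIn {n : ℕ} (Ω r : Set (Euc n)) : Prop :=
  ∃ p ∈ Ω, ∃ d : Euc n, d ≠ 0 ∧ r = {x | ∃ t : ℝ, 0 ≤ t ∧ x = p + t • d} ∩ Ω

/-- A line in `Ω`: the nonempty intersection of a straight line with `Ω`. -/
def IsLineIn {n : ℕ} (Ω L : Set (Euc n)) : Prop :=
  L.Nonempty ∧ ∃ p d : Euc n, d ≠ 0 ∧ L = {x | ∃ t : ℝ, x = p + t • d} ∩ Ω

/-- `a` is an accumulation point of the set `s ⊆ Ω` on the boundary of `Ω`.
For a ray `r` in a convex domain `Ω` there is exactly one such point, denoted `a(r)`. -/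
def IsBdryLimit {n : ℕ} (Ω s : Set (Euc n)) (a : Euc n) : Prop :=
  a ∈ frontier Ω ∧ a ∈ closure s

/-- `e` is a focusing point of the isometry `τ : Ω → Ω'`: an extreme point of the closure
of `Ω` such that for any two rays `r₁, r₂` in `Ω` with `a(r₁) = a(r₂) = e` one has
`a(τ(r₁)) = a(τ(r₂))`. -/
def IsFocusingPoint {n : ℕ} (Ω Ω' : Set (Euc n)) (τ : Euc n → Euc n) (e : Euc n) : Prop :=
  e ∈ Set.extremePoints ℝ (closure Ω) ∧
    ∀ r₁ r₂ : Set (Euc n), IsRayIn Ω r₁ → IsRayIn Ω r₂ →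
      IsBdryLimit Ω r₁ e → IsBdryLimit Ω r₂ e →
      ∀ a₁ a₂ : Euc n, IsBdryLimit Ω' (τ '' r₁) a₁ → IsBdryLimit Ω' (τ '' r₂) a₂ → a₁ = a₂

/-- An extreme line in `Ω`: a line in `Ω` whose closure meets `∂Ω` in extreme points
of the closure of `Ω`. -/
def IsExtremeLine {n : ℕ} (Ω L : Set (Euc n)) : Prop :=
  IsLineIn Ω L ∧ ∀ x ∈ closure L ∩ frontier Ω, x ∈ Set.extremePoints ℝ (closure Ω)

/-- `s` is rigid in `Ω`: for any two points `a, b` of `s` the segment `[a,b]` is the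
unique geodesic from `a` to `b` in `(Ω, d_Ω)`, i.e. every point `z` with
`d(a,z) + d(z,b) = d(a,b)` lies on the segment `[a,b]`. -/
def IsRigidSet {n : ℕ} (Ω s : Set (Euc n)) : Prop :=
  ∀ a ∈ s, ∀ b ∈ s, ∀ z ∈ Ω,
    hilbertDist Ω a z + hilbertDist Ω z b = hilbertDist Ω a b → z ∈ segment ℝ a b

/-- A face of a closed convex set `C`: a convex subset `F ⊆ C` such that whenever an open
segment between two points of `C` meets `F`, the whole closed segment lies in `F`. -/
def IsFace {n : ℕ} (C F : Set (Euc n)) : Prop :=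
  Convex ℝ F ∧ IsExtreme ℝ C F

/-- A face of `C` which is neither empty nor all of `C`. -/
def IsProperFace {n : ℕ} (C F : Set (Euc n)) : Prop :=
  IsFace C F ∧ F.Nonempty ∧ F ≠ C

/-- `Ω` is a cone with vertex `v` and base `B`: `B` is an `(n−1)`-dimensional convex
domain lying in a hyperplane not containing `v`, and `Ω` is the union of the open
segments from `v` to the points of `B`. -/
def IsConeWith {n : ℕ} (Ω : Set (Euc n)) (v : Euc n) (B : Set (Euc n)) : Prop :=
  ∃ (f : Euc n →ₗ[ℝ] ℝ) (c : ℝ), f ≠ 0 ∧ (∀ b ∈ B, f b = c) ∧ f v ≠ c ∧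
    B.Nonempty ∧ Convex ℝ B ∧ Bornology.IsBounded B ∧
    B = intrinsicInterior ℝ B ∧
    (affineSpan ℝ B : Set (Euc n)) = {x | f x = c} ∧
    Ω = ⋃ b ∈ B, openSegment ℝ v b

/-- `Ω` is a cone. -/
def IsCone {n : ℕ} (Ω : Set (Euc n)) : Prop :=
  ∃ v B, IsConeWith Ω v B

theorem mem_relint_iff {n : ℕ} {F : Set (Euc n)} {x : Euc n} :
    x ∈ intrinsicInterior ℝ F ↔ x ∈ affineSpan ℝ F ∧
      ∃ δ > 0, ∀ z ∈ affineSpan ℝ F, dist z x < δ → z ∈ F := by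
  rw [mem_intrinsicInterior]
  constructor
  · rintro ⟨y, hy, rfl⟩
    refine ⟨y.2, ?_⟩
    rw [mem_interior_iff_mem_nhds, Metric.mem_nhds_iff] at hy
    obtain ⟨δ, hδ, h⟩ := hy
    exact ⟨δ, hδ, fun z hz hd => h (show (⟨z, hz⟩ : affineSpan ℝ F) ∈ Metric.ball y δ from hd)⟩
  · rintro ⟨hx, δ, hδ, h⟩
    refine ⟨⟨x, hx⟩, ?_, rfl⟩
    rw [mem_interior_iff_mem_nhds, Metric.mem_nhds_iff]
    exact ⟨δ, hδ, fun z hz => h z z.2 hz⟩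

/-- The homothety centred at `w` taking `y` to a point `x` of the open segment carries a relative
neighbourhood of `y` in `F` to one of `x`. -/
theorem openSegment_mem_relint {n : ℕ} {F : Set (Euc n)} (hF : Convex ℝ F) {y w x : Euc n}
    (hy : y ∈ intrinsicInterior ℝ F) (hw : w ∈ F) (hx : x ∈ openSegment ℝ y w) :
    x ∈ intrinsicInterior ℝ F := by
  have hyF := intrinsicInterior_subset hy
  obtain ⟨hya, δ, hδ, h⟩ := mem_relint_iff.1 hy
  refine mem_relint_iff.2 ⟨subset_affineSpan ℝ F (hF.openSegment_subset hyF hw hx), ?_⟩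
  obtain ⟨c, d, hc, hd, hcd, rfl⟩ := hx
  refine ⟨c * δ, by positivity, fun z hz hzd => ?_⟩
  have hy' : w + c⁻¹ • (z - w) ∈ F := by
    apply h
    · have := AffineMap.lineMap_mem c⁻¹ (subset_affineSpan ℝ F hw) hz
      rwa [AffineMap.lineMap_apply, vsub_eq_sub, vadd_eq_add, add_comm] at this
    · have e : w + c⁻¹ • (z - w) - y = c⁻¹ • (z - (c • y + d • w)) := by
        obtain rfl : d = 1 - c := by linarith
        match_scalars <;> field_simp <;> ring
      rw [dist_eq_norm, e, norm_smul, Real.norm_of_nonneg (by positivity), ← dist_eq_norm]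
      rw [inv_mul_lt_iff₀ hc]
      exact hzd
  have := hF hy' hw hc.le hd.le hcd
  convert this using 1
  obtain rfl : d = 1 - c := by linarith
  match_scalars <;> field_simp <;> ring

/-- The segment from `b ∈ F` to a relative interior point `a` of `F` can be prolonged a little
beyond `a` without leaving `F`. -/
theorem relint_prolong {n : ℕ} {F : Set (Euc n)} {a b : Euc n}
    (ha : a ∈ intrinsicInterior ℝ F) (hb : b ∈ F) : ∃ ε : ℝ, 0 < ε ∧ a + ε • (a - b) ∈ F := by
  obtain ⟨haa, δ, hδ, h⟩ := mem_relint_iff.1 ha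
  have hpos : 0 < ‖a - b‖ + 1 := by positivity
  refine ⟨δ / (‖a - b‖ + 1), by positivity, h _ ?_ ?_⟩
  · have := AffineMap.lineMap_mem (-(δ / (‖a - b‖ + 1))) haa (subset_affineSpan ℝ F hb)
    convert this using 1
    rw [AffineMap.lineMap_apply, vsub_eq_sub, vadd_eq_add]
    module
  · rw [dist_eq_norm, add_sub_cancel_left, norm_smul, Real.norm_of_nonneg (by positivity),
      div_mul_eq_mul_div, div_lt_iff₀ hpos]
    nlinarith

/-- The minimal face of `C` containing `a`: the points `x ∈ C` such that the segment from `x` to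
`a` can be prolonged within `C` beyond `a`. -/
def minFace {n : ℕ} (C : Set (Euc n)) (a : Euc n) : Set (Euc n) :=
  {x | x ∈ C ∧ ∃ ε : ℝ, 0 < ε ∧ a + ε • (a - x) ∈ C}

theorem minFace_shrink {n : ℕ} {C : Set (Euc n)} (hC : Convex ℝ C) {a x : Euc n} (ha : a ∈ C)
    {ε η : ℝ} (hη : 0 < η) (hle : η ≤ ε) (h : a + ε • (a - x) ∈ C) : a + η • (a - x) ∈ C := by
  have hε : 0 < ε := hη.trans_le hle
  have := hC h ha (a := η / ε) (b := 1 - η / ε) (by positivity)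
    (by rw [sub_nonneg, div_le_one hε]; exact hle) (by ring)
  convert this using 1
  match_scalars <;> field_simp <;> ring

theorem minFace_isFace {n : ℕ} {C : Set (Euc n)} (hC : Convex ℝ C) {a : Euc n} (ha : a ∈ C) :
    IsFace C (minFace C a) := by
  constructor
  · rintro x ⟨hx, ε, hε, hxε⟩ y ⟨hy, η, hη, hyη⟩ s t hs ht hst
    refine ⟨hC hx hy hs ht hst, min ε η, lt_min hε hη, ?_⟩
    have h1 := minFace_shrink hC ha (lt_min hε hη) (min_le_left _ _) hxε
    have h2 := minFace_shrink hC ha (lt_min hε hη) (min_le_right _ _) hyη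
    have := hC h1 h2 hs ht hst
    convert this using 1
    obtain rfl : t = 1 - s := by linarith
    module
  · refine ⟨fun x hx => hx.1, ?_⟩
    rintro x hx y hy z ⟨hz, ε, hε, hzε⟩ ⟨s, t, hs, ht, hst, rfl⟩
    -- With `w` the overshoot of `z`, the point `(w + εt • y) / (1 + εt)` overshoots `a` from `x`.
    refine ⟨hx, ε * s / (1 + ε * t), by positivity, ?_⟩
    have := hC hzε hy (a := 1 / (1 + ε * t)) (b := ε * t / (1 + ε * t)) (by positivity)
      (by positivity) (by field_simp)
    convert this using 1
    obtain rfl : s = 1 - t := by linarith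
    have : 1 + ε * t ≠ 0 := by positivity
    match_scalars <;> field_simp <;> ring

theorem self_mem_relint_minFace {n : ℕ} {C : Set (Euc n)} (hC : Convex ℝ C) {a : Euc n}
    (ha : a ∈ C) : a ∈ intrinsicInterior ℝ (minFace C a) := by
  have hF := (minFace_isFace hC ha).1
  have hne : (minFace C a).Nonempty := ⟨a, ha, 1, one_pos, by simpa using ha⟩
  obtain ⟨y, hy⟩ := hne.intrinsicInterior hF
  obtain ⟨hyC, ε, hε, hw⟩ := intrinsicInterior_subset hy
  refine openSegment_mem_relint hF hy (w := a + ε • (a - y)) ⟨hw, ε⁻¹, by positivity, ?_⟩ ?_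
  · convert hyC using 1
    match_scalars <;> field_simp <;> ring
  · refine ⟨ε / (1 + ε), 1 / (1 + ε), by positivity, by positivity, by field_simp; ring, ?_⟩
    match_scalars <;> field_simp <;> ring

theorem openSegment_prolong {n : ℕ} {p q a b : Euc n} (ha : a ∈ openSegment ℝ p q)
    (hb : b ∈ openSegment ℝ p q) : ∃ ε : ℝ, 0 < ε ∧ a + ε • (a - b) ∈ openSegment ℝ p q := by
  obtain ⟨s, t, hs, ht, hst, rfl⟩ := ha
  obtain ⟨u, v, hu, hv, huv, rfl⟩ := hb
  -- Each coefficient moves by at most `min s t / 2`, since `|s - u| < 1`.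
  have hm : 0 < min s t := lt_min hs ht
  have h1 := min_le_left s t
  have h2 := min_le_right s t
  refine ⟨min s t / 2, by positivity, s + min s t / 2 * (s - u), t + min s t / 2 * (t - v),
    by nlinarith, by nlinarith, ?_, ?_⟩
  · linear_combination (1 + min s t / 2) * hst - (min s t / 2) * huv
  · module

/-- Let `Ω ⊆ ℝⁿ` be an open bounded convex set. Two distinct points
`α, β ∈ ∂Ω` lie in the relative interior of the same face of the closure of `Ω` if and
only if there is an open line segment `S ⊆ ∂Ω` containing both `α` and `β`. -/
theorem stmt_14 {n : ℕ} (Ω : Set (Euc n))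
    (hne : Ω.Nonempty) (hop : IsOpen Ω) (hbd : Bornology.IsBounded Ω) (hcv : Convex ℝ Ω)
    (α β : Euc n) (hα : α ∈ frontier Ω) (hβ : β ∈ frontier Ω) (hαβ : α ≠ β) :
    (∃ F : Set (Euc n), IsFace (closure Ω) F ∧
        α ∈ intrinsicInterior ℝ F ∧ β ∈ intrinsicInterior ℝ F) ↔
      (∃ p q : Euc n, p ≠ q ∧ openSegment ℝ p q ⊆ frontier Ω ∧
        α ∈ openSegment ℝ p q ∧ β ∈ openSegment ℝ p q) := by
  constructor
  · rintro ⟨F, ⟨hFc, hFe⟩, hαF, hβF⟩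
    obtain ⟨ε, hε, hp⟩ := relint_prolong hαF (intrinsicInterior_subset hβF)
    obtain ⟨η, hη, hq⟩ := relint_prolong hβF (intrinsicInterior_subset hαF)
    have hαS : α ∈ openSegment ℝ (α + ε • (α - β)) (β + η • (β - α)) := by
      refine ⟨(1 + η) / (1 + ε + η), ε / (1 + ε + η), by positivity, by positivity,
        by field_simp; ring, ?_⟩
      match_scalars <;> field_simp <;> ring
    have hβS : β ∈ openSegment ℝ (α + ε • (α - β)) (β + η • (β - α)) := by
      refine ⟨η / (1 + ε + η), (1 + ε) / (1 + ε + η), by positivity, by positivity,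
        by field_simp; ring, ?_⟩
      match_scalars <;> field_simp <;> ring
    have hpC := hFe.1 hp
    have hqC := hFe.1 hq
    generalize α + ε • (α - β) = p at *
    generalize β + η • (β - α) = q at *
    refine ⟨p, q, ?_, ?_, hαS, hβS⟩
    · rintro rfl
      simp only [openSegment_same, mem_singleton_iff] at hαS hβS
      exact hαβ (hαS.trans hβS.symm)
    · have hαΩ : α ∉ Ω := by
        rw [hop.frontier_eq] at hα
        exact hα.2
      obtain ⟨f, hf⟩ := geometric_hahn_banach_open_point hcv hop hαΩ
      have hle : ∀ x ∈ closure Ω, f x ≤ f α := fun x hx =>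
        closure_minimal (fun y hy => (hf y hy).le)
          (isClosed_le f.continuous continuous_const) hx
      intro z hz
      rw [hop.frontier_eq]
      refine ⟨hcv.closure.openSegment_subset hpC hqC hz, fun hzΩ => ?_⟩
      have hlt := hf z hzΩ
      have hfp := hle p hpC
      have hfq := hle q hqC
      obtain ⟨s, t, hs, ht, hst, hα'⟩ := hαS
      obtain ⟨u, v, hu, hv, huv, rfl⟩ := hz
      have e : s * f p + t * f q = f α := by rw [← hα']; simp
      have hp' : f p = f α := by
        obtain rfl : t = 1 - s := by linarith
        nlinarith
      have hq' : f q = f α := by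
        obtain rfl : t = 1 - s := by linarith
        nlinarith
      simp only [map_add, map_smul, smul_eq_mul, hp', hq', ← add_mul, huv, one_mul] at hlt
      exact lt_irrefl _ hlt
  · rintro ⟨p, q, -, hS, hαS, hβS⟩
    have hC : Convex ℝ (closure Ω) := hcv.closure
    have hSC : openSegment ℝ p q ⊆ closure Ω := hS.trans frontier_subset_closure
    have hSF : openSegment ℝ p q ⊆ minFace (closure Ω) α := fun x hx => by
      obtain ⟨ε, hε, h⟩ := openSegment_prolong hαS hx
      exact ⟨hSC hx, ε, hε, hSC h⟩
    have hαF := self_mem_relint_minFace hC (hSC hαS)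
    refine ⟨_, minFace_isFace hC (hSC hαS), hαF, ?_⟩
    obtain ⟨ε, hε, h⟩ := openSegment_prolong hβS hαS
    refine openSegment_mem_relint (minFace_isFace hC (hSC hαS)).1 hαF (hSF h) ?_
    refine ⟨ε / (1 + ε), 1 / (1 + ε), by positivity, by positivity, by field_simp; ring, ?_⟩
    match_scalars <;> field_simp <;> ring
end
end

section
/- Let Ω be an open bounded convex set in ℝⁿ with its Hilbert metric and let I and I' be the relative interiors of two proper faces of the closure of Ω. If there exists a rigid line in Ω with one accumulation point in I and the other in I', then every line in Ω with one accumulation point in I and the other in I' is rigid. -/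
/-!
Let `V`, `V'` be the direction spaces of the faces `F`, `F'`. A line with endpoints `p`, `q` in the
relative interiors of `F`, `F'` is rigid if and only if there is no nonzero `u ∈ V` with
`u ∈ V' + ℝ (q - p)` (`Obstructed`). This condition depends only on the faces: replacing `p`, `q` by
`p'`, `q'` changes `q - p` by an element of `V'` minus an element of `V`, which can be absorbed
(`Obstructed.transfer`).

The criterion rests on supporting functionals `φ` at `q` and `ψ` at `p`. With
`h x = log (φ q - φ x) - log (ψ p - ψ x)` one has `h x - h y ≤ d(x, y)`, with equality exactly when
`φ` attains its supporting value at the endpoint of the line `xy` beyond `y`, and `ψ` at the endpoint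
beyond `x` (`pot_le`). In particular `d(a, b) = h a - h b` for `a`, `b` in order on the line `pq`.

If `d(a, z) + d(z, b) = d(a, b)` with `z ∉ [a, b]`, equality holds for `(a, z)` and `(z, b)` as well.
The endpoints beyond `z` and `b` of these two lines then lie in `φ = φ q` on opposite sides of `q`,
so they belong to `F'` by extremality; similarly the other two endpoints belong to `F`. Their
displacements from `q` and `p` give the obstruction (`obstructed_of_eq`). Conversely, given an
obstruction, moving the midpoint of `a`, `b` slightly along `u` gives a point `z` off the line for
which all four endpoints lie in `F` or `F'`, so the distances add up
(`not_rigid_of_obstructed`).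
-/

open Set
open scoped LinearAlgebra.Projectivization
open scoped Classical

noncomputable section

/-- `L` is a line in `Ω` whose two accumulation points on `∂Ω` are `a` and `b`. -/
def IsLineFromTo {n : ℕ} (Ω L : Set (Euc n)) (a b : Euc n) : Prop :=
  IsLineIn Ω L ∧ a ≠ b ∧ a ∈ frontier Ω ∧ b ∈ frontier Ω ∧ a ∈ closure L ∧ b ∈ closure L

variable {n : ℕ} {Ω : Set (Euc n)}

/-! ### The Hilbert distance in terms of ray parameters -/

lemma frontier_not_mem (hop : IsOpen Ω) {p : Euc n} (hp : p ∈ frontier Ω) : p ∉ Ω := by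
  rw [hop.frontier_eq] at hp
  exact hp.2

lemma mem_closure_of_frontier {p : Euc n} (hp : p ∈ frontier Ω) : p ∈ closure Ω :=
  frontier_subset_closure hp

/-- A point strictly between a point of the open convex set `Ω` and a point of its closure
lies in `Ω`. -/
lemma between_mem (hop : IsOpen Ω) (hcv : Convex ℝ Ω) {x c : Euc n} (hx : x ∈ Ω)
    (hc : c ∈ closure Ω) {t : ℝ} (h0 : 0 ≤ t) (h1 : t < 1) : x + t • (c - x) ∈ Ω := by
  rcases h0.eq_or_lt with rfl | h0
  · simpa using hx
  have := hcv.openSegment_interior_closure_subset_interior (by rwa [hop.interior_eq]) hc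
  rw [hop.interior_eq] at this
  exact this ⟨1 - t, t, by linarith, h0, by ring, by module⟩

/-- A ray from a point of `Ω` meets the frontier at one parameter only. -/
lemma ray_unique (hop : IsOpen Ω) (hcv : Convex ℝ Ω) {x d : Euc n} (hx : x ∈ Ω) {s t : ℝ}
    (hs : 0 < s) (ht : 0 < t) (hfs : x + s • d ∈ frontier Ω) (hft : x + t • d ∈ frontier Ω) :
    s = t := by
  have key : ∀ s t : ℝ, 0 < s → s < t → x + s • d ∈ frontier Ω → x + t • d ∈ frontier Ω →
      False := by
    intro s t hs hst hfs hft
    have ht : 0 < t := hs.trans hst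
    have := between_mem hop hcv hx (mem_closure_of_frontier hft) (t := s / t)
      (by positivity) ((div_lt_one ht).2 hst)
    apply frontier_not_mem hop hfs
    convert this using 2
    rw [add_sub_cancel_left, smul_smul, div_mul_cancel₀ _ ht.ne']
  rcases lt_trichotomy s t with h | h | h
  · exact (key s t hs h hfs hft).elim
  · exact h
  · exact (key t s ht h hft hfs).elim

lemma ray_exists (hop : IsOpen Ω) (hbd : Bornology.IsBounded Ω) {x d : Euc n} (hx : x ∈ Ω)
    (hd : d ≠ 0) : ∃ s : ℝ, 0 < s ∧ x + s • d ∈ frontier Ω := by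
  obtain ⟨R, hR⟩ := hbd.subset_closedBall x
  have hd' : 0 < ‖d‖ := norm_pos_iff.2 hd
  let T : ℝ := (|R| + 1) / ‖d‖
  have hT : 0 < T := by positivity
  have hout : x + T • d ∉ Ω := by
    intro h
    have h1 := hR h
    rw [Metric.mem_closedBall, dist_eq_norm, add_sub_cancel_left, norm_smul, Real.norm_eq_abs,
      abs_of_pos hT, div_mul_cancel₀ _ hd'.ne'] at h1
    linarith [le_abs_self R]
  let γ : ℝ → Euc n := fun t => x + t • d
  have hγ : Continuous γ := by fun_prop
  -- Adding the negative axis makes every frontier point of the parameter set a positive one.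
  let S : Set ℝ := γ ⁻¹' Ω ∪ Iio 0
  have hSo : IsOpen S := (hop.preimage hγ).union isOpen_Iio
  obtain ⟨s, hs⟩ : (frontier S).Nonempty := by
    rw [nonempty_frontier_iff]
    refine ⟨⟨-1, Or.inr (by simp)⟩, fun h => ?_⟩
    rcases (h ▸ mem_univ T : T ∈ S) with h | h
    · exact hout h
    · exact absurd h (by simpa using hT.le)
  rw [hSo.frontier_eq] at hs
  obtain ⟨hsc, hsn⟩ := hs
  have hs0 : 0 ≤ s := by
    by_contra h
    exact hsn (Or.inr (by simpa using h))
  have hsΩ : γ s ∉ Ω := fun h => hsn (Or.inl h)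
  have hs1 : 0 < s := by
    rcases hs0.eq_or_lt with h | h
    · subst h
      exact absurd (by simpa [γ] using hx) hsΩ
    · exact h
  refine ⟨s, hs1, ?_⟩
  rw [hop.frontier_eq]
  refine ⟨?_, hsΩ⟩
  rw [closure_union, closure_Iio] at hsc
  rcases hsc with h | h
  · exact hγ.closure_preimage_subset _ h
  · exact absurd h (by simpa using hs1)

/-- A frontier point on the line `xy` that is closer to `x` than to `y` lies behind `x`. -/
lemma pair_param (hop : IsOpen Ω) (hcv : Convex ℝ Ω) {x y α : Euc n} (hx : x ∈ Ω)
    (hy : y ∈ Ω) (hα : α ∈ frontier Ω) (hcol : Collinear ℝ ({α, x, y} : Set (Euc n)))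
    (hxy : x ≠ y) (hd : dist α x < dist α y) :
    ∃ s : ℝ, 0 < s ∧ α = x + s • (x - y) := by
  have hm : α ∈ line[ℝ, x, y] := by
    apply hcol.mem_affineSpan_of_mem_of_ne (p₁ := x) (p₂ := y) (p₃ := α) <;> simp [hxy]
  obtain ⟨c, rfl⟩ := mem_affineSpan_pair_iff_exists_lineMap_eq.1 hm
  rw [AffineMap.lineMap_apply, vsub_eq_sub, vadd_eq_add] at *
  have hpos : 0 < ‖y - x‖ := norm_pos_iff.2 (sub_ne_zero.2 hxy.symm)
  have e1 : dist (c • (y - x) + x) x = |c| * ‖y - x‖ := by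
    rw [dist_eq_norm, add_sub_cancel_right, norm_smul, Real.norm_eq_abs]
  have e2 : dist (c • (y - x) + x) y = |c - 1| * ‖y - x‖ := by
    rw [dist_eq_norm, ← Real.norm_eq_abs, ← norm_smul]
    congr 1; module
  rw [e1, e2] at hd
  have hc : |c| < |c - 1| := lt_of_mul_lt_mul_right hd hpos.le
  have hc1 : c < 1 := by
    by_contra h
    rw [abs_of_nonneg (by linarith), abs_of_nonneg (by linarith)] at hc
    linarith
  refine ⟨-c, ?_, by module⟩
  by_contra h
  apply frontier_not_mem hop hα
  have := between_mem hop hcv hx (subset_closure hy) (t := c) (by linarith) hc1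
  rwa [add_comm]

lemma collinear_param (x y : Euc n) (s : ℝ) :
    Collinear ℝ ({x + s • (x - y), x, y} : Set (Euc n)) := by
  rw [collinear_iff_of_mem (p₀ := x) (by simp)]
  refine ⟨x - y, ?_⟩
  rintro p (rfl | rfl | rfl)
  · exact ⟨s, by simp [add_comm]⟩
  · exact ⟨0, by simp⟩
  · exact ⟨-1, by simp⟩

lemma dist_param (x y : Euc n) {s : ℝ} (hs : 0 < s) :
    dist (x + s • (x - y)) x = s * ‖x - y‖ ∧ dist (x + s • (x - y)) y = (1 + s) * ‖x - y‖ := by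
  constructor
  · rw [dist_eq_norm, add_sub_cancel_left, norm_smul, Real.norm_eq_abs, abs_of_pos hs]
  · rw [dist_eq_norm, show x + s • (x - y) - y = (1 + s) • (x - y) by module, norm_smul,
      Real.norm_eq_abs, abs_of_pos (by linarith)]

/-- The Hilbert distance when the line `xy` meets the frontier at `x + s (x - y)` and
`y + r (y - x)`. Since the endpoints are unique, the choice made in `hilbertDist` is harmless. -/
lemma hilbertDist_param (hop : IsOpen Ω) (hcv : Convex ℝ Ω) {x y : Euc n} (hx : x ∈ Ω)
    (hy : y ∈ Ω) (hxy : x ≠ y) {s r : ℝ} (hs : 0 < s) (hr : 0 < r)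
    (hα : x + s • (x - y) ∈ frontier Ω) (hβ : y + r • (y - x) ∈ frontier Ω) :
    hilbertDist Ω x y = Real.log ((1 + s) / s * ((1 + r) / r)) := by
  have hpos : 0 < ‖x - y‖ := norm_pos_iff.2 (sub_ne_zero.2 hxy)
  have hpos' : 0 < ‖y - x‖ := norm_pos_iff.2 (sub_ne_zero.2 hxy.symm)
  have hex : ∃ p : Euc n × Euc n, IsHilbertPair Ω x y p.1 p.2 := by
    refine ⟨(x + s • (x - y), y + r • (y - x)), hα, hβ, collinear_param x y s, ?_, ?_, ?_⟩
    · have := collinear_param y x r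
      rwa [pair_comm] at this
    · simp only [dist_param x y hs]; nlinarith
    · simp only [dist_param y x hr]; nlinarith
  unfold hilbertDist
  rw [dif_pos hex]
  obtain ⟨h1, h2, h3, h4, h5, h6⟩ := hex.choose_spec
  obtain ⟨s', hs', e1⟩ := pair_param hop hcv hx hy h1 h3 hxy h5
  obtain ⟨r', hr', e2⟩ := pair_param hop hcv hy hx h2 (by rwa [pair_comm] at h4) hxy.symm h6
  rw [e1] at h1
  rw [e2] at h2
  obtain rfl := ray_unique hop hcv hx hs hs' hα h1
  obtain rfl := ray_unique hop hcv hy hr hr' hβ h2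
  rw [e1, e2, (dist_param x y hs).1, (dist_param x y hs).2, (dist_param y x hr).1,
    (dist_param y x hr).2, mul_div_mul_right _ _ hpos.ne', mul_div_mul_right _ _ hpos'.ne']

lemma hilbertDist_self (x : Euc n) : hilbertDist Ω x x = 0 := by
  unfold hilbertDist
  rw [dif_neg]
  rintro ⟨p, hp⟩
  exact lt_irrefl _ hp.2.2.2.2.1

/-- The line through two points of `Ω` leaves `Ω` on both sides. -/
lemma exists_params (hop : IsOpen Ω) (hbd : Bornology.IsBounded Ω) {x y : Euc n} (hx : x ∈ Ω)
    (hy : y ∈ Ω) (hxy : x ≠ y) : ∃ s r : ℝ, 0 < s ∧ 0 < r ∧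
      x + s • (x - y) ∈ frontier Ω ∧ y + r • (y - x) ∈ frontier Ω := by
  obtain ⟨s, hs, h⟩ := ray_exists hop hbd hx (sub_ne_zero.2 hxy)
  obtain ⟨r, hr, h'⟩ := ray_exists hop hbd hy (sub_ne_zero.2 hxy.symm)
  exact ⟨s, r, hs, hr, h, h'⟩

lemma hilbertDist_comm (hop : IsOpen Ω) (hbd : Bornology.IsBounded Ω) (hcv : Convex ℝ Ω)
    {x y : Euc n} (hx : x ∈ Ω) (hy : y ∈ Ω) : hilbertDist Ω x y = hilbertDist Ω y x := by
  by_cases hxy : x = y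
  · rw [hxy]
  obtain ⟨s, r, hs, hr, h, h'⟩ := exists_params hop hbd hx hy hxy
  rw [hilbertDist_param hop hcv hx hy hxy hs hr h h',
    hilbertDist_param hop hcv hy hx (Ne.symm hxy) hr hs h' h, mul_comm]

lemma hilbertDist_pos (hop : IsOpen Ω) (hbd : Bornology.IsBounded Ω) (hcv : Convex ℝ Ω)
    {x y : Euc n} (hx : x ∈ Ω) (hy : y ∈ Ω) (hxy : x ≠ y) : 0 < hilbertDist Ω x y := by
  obtain ⟨s, r, hs, hr, h, h'⟩ := exists_params hop hbd hx hy hxy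
  rw [hilbertDist_param hop hcv hx hy hxy hs hr h h']
  apply Real.log_pos
  have h1 : 1 < (1 + s) / s := by rw [lt_div_iff₀ hs]; linarith
  have h2 : 1 < (1 + r) / r := by rw [lt_div_iff₀ hr]; linarith
  nlinarith

/-! ### Supporting functionals and the Hilbert distance -/

/-- `φ` strictly supports the open set `Ω` at `q`: `φ < φ q` on `Ω`. -/
def Supports (Ω : Set (Euc n)) (φ : Euc n →L[ℝ] ℝ) (q : Euc n) : Prop :=
  ∀ x ∈ Ω, φ x < φ q

lemma exists_supports (hop : IsOpen Ω) (hcv : Convex ℝ Ω) {q : Euc n} (hq : q ∈ frontier Ω) :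
    ∃ φ : Euc n →L[ℝ] ℝ, Supports Ω φ q :=
  geometric_hahn_banach_open_point hcv hop (frontier_not_mem hop hq)

lemma Supports.le {φ : Euc n →L[ℝ] ℝ} {q x : Euc n} (h : Supports Ω φ q)
    (hx : x ∈ closure Ω) : φ x ≤ φ q :=
  closure_minimal (fun y hy => (h y hy).le) (isClosed_le φ.continuous continuous_const) hx

lemma Supports.frontier {φ : Euc n →L[ℝ] ℝ} {q x : Euc n} (hop : IsOpen Ω) (h : Supports Ω φ q)
    (hx : x ∈ closure Ω) (he : φ x = φ q) : x ∈ frontier Ω := by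
  rw [hop.frontier_eq]
  exact ⟨hx, fun hx' => (h x hx').ne he⟩

/-- The potential `log (φ q - φ x) - log (ψ p - ψ x)` of a pair of supporting functionals.
Differences of potentials bound the Hilbert distance from below. -/
def pot (φ ψ : Euc n →L[ℝ] ℝ) (q p x : Euc n) : ℝ :=
  Real.log (φ q - φ x) - Real.log (ψ p - ψ x)

/-- Scalar form of the comparison: if the affine function with values `A` at `x` and `A'` at `y`
is nonnegative at `y + r (y - x)`, then `log A - log A'` is at most `log ((1 + r) / r)`. -/
lemma log_ratio_le {A A' r : ℝ} (hA : 0 < A) (hA' : 0 < A') (hr : 0 < r)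
    (h : 0 ≤ A' + r * (A' - A)) : Real.log A - Real.log A' ≤ Real.log ((1 + r) / r) := by
  rw [← Real.log_div hA.ne' hA'.ne']
  apply Real.log_le_log (by positivity)
  rw [div_le_div_iff₀ hA' hr]
  nlinarith

lemma log_ratio_eq_iff {A A' r : ℝ} (hA : 0 < A) (hA' : 0 < A') (hr : 0 < r) :
    Real.log A - Real.log A' = Real.log ((1 + r) / r) ↔ A' + r * (A' - A) = 0 := by
  rw [← Real.log_div hA.ne' hA'.ne']
  have h1 : 0 < A / A' := by positivity
  have h2 : 0 < (1 + r) / r := by positivity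
  rw [Real.log_injOn_pos.eq_iff h1 h2, div_eq_div_iff hA'.ne' hr.ne']
  constructor <;> intro h <;> linarith

lemma Supports.gap {φ : Euc n →L[ℝ] ℝ} {q x y : Euc n} (r : ℝ) :
    φ q - φ (y + r • (y - x)) = (φ q - φ y) + r * ((φ q - φ y) - (φ q - φ x)) := by
  simp only [map_add, map_smul, map_sub, smul_eq_mul]; ring

lemma pot_le (hop : IsOpen Ω) (hcv : Convex ℝ Ω) {φ ψ : Euc n →L[ℝ] ℝ} {q p : Euc n}
    (hφ : Supports Ω φ q) (hψ : Supports Ω ψ p) {x y : Euc n} (hx : x ∈ Ω)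
    (hy : y ∈ Ω) (hxy : x ≠ y) {s r : ℝ} (hs : 0 < s) (hr : 0 < r)
    (hα : x + s • (x - y) ∈ frontier Ω) (hβ : y + r • (y - x) ∈ frontier Ω) :
    pot φ ψ q p x - pot φ ψ q p y ≤ hilbertDist Ω x y ∧
    (pot φ ψ q p x - pot φ ψ q p y = hilbertDist Ω x y ↔
      φ (y + r • (y - x)) = φ q ∧ ψ (x + s • (x - y)) = ψ p) := by
  rw [hilbertDist_param hop hcv hx hy hxy hs hr hα hβ,
    Real.log_mul (by positivity) (by positivity)]
  have a1 := sub_pos.2 (hφ x hx)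
  have a2 := sub_pos.2 (hφ y hy)
  have b1 := sub_pos.2 (hψ x hx)
  have b2 := sub_pos.2 (hψ y hy)
  have c1 := sub_nonneg.2 (hφ.le (mem_closure_of_frontier hβ))
  have c2 := sub_nonneg.2 (hψ.le (mem_closure_of_frontier hα))
  rw [Supports.gap] at c1 c2
  have l1 := log_ratio_le a1 a2 hr c1
  have l2 := log_ratio_le b2 b1 hs c2
  have e1 := log_ratio_eq_iff a1 a2 hr
  have e2 := log_ratio_eq_iff b2 b1 hs
  rw [← Supports.gap, sub_eq_zero, eq_comm (a := φ q)] at e1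
  rw [← Supports.gap, sub_eq_zero, eq_comm (a := ψ p)] at e2
  rw [← e1, ← e2]
  unfold pot
  refine ⟨by linarith, fun h => ⟨by linarith, by linarith⟩, fun h => by linarith [h.1, h.2]⟩

/-! ### Lines and their endpoints -/

lemma line_mem_iff (hop : IsOpen Ω) (hcv : Convex ℝ Ω) {L : Set (Euc n)} {p q : Euc n}
    (hL : IsLineFromTo Ω L p q) (x : Euc n) :
    x ∈ L ↔ ∃ t : ℝ, 0 < t ∧ t < 1 ∧ x = p + t • (q - p) := by
  obtain ⟨⟨hne, p0, d, hd, rfl⟩, hpq, hp, hq, hpL, hqL⟩ := hL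
  have hline : closure ({x | ∃ t : ℝ, x = p0 + t • d} ∩ Ω) ⊆ {x | ∃ t : ℝ, x = p0 + t • d} := by
    apply closure_minimal inter_subset_left
    have : {x : Euc n | ∃ t : ℝ, x = p0 + t • d} = (AffineSubspace.mk' p0 (ℝ ∙ d) : Set (Euc n)) := by
      ext x
      simp only [mem_ofPred_eq, SetLike.mem_coe, AffineSubspace.mem_mk',
        Submodule.mem_span_singleton, vsub_eq_sub]
      exact exists_congr fun t => ⟨fun h => by rw [h]; simp, fun h => by rw [h]; simp⟩
    rw [this]
    exact AffineSubspace.closed_of_finiteDimensional _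
  obtain ⟨t1, h1⟩ := hline hpL
  obtain ⟨t2, h2⟩ := hline hqL
  have ht : t2 - t1 ≠ 0 := by
    intro h
    apply hpq
    rw [h1, h2, sub_eq_zero.1 h]
  have hcp := mem_closure_of_frontier hp
  have hcq := mem_closure_of_frontier hq
  have key : ∀ x, x ∈ {x | ∃ t : ℝ, x = p0 + t • d} ∩ Ω →
      ∃ t : ℝ, 0 < t ∧ t < 1 ∧ x = p + t • (q - p) := by
    rintro x ⟨⟨t, ht'⟩, hxΩ⟩
    have hx : x = p + ((t - t1) / (t2 - t1)) • (q - p) := by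
      have : q - p = (t2 - t1) • d := by rw [h1, h2]; module
      rw [this, smul_smul, div_mul_cancel₀ _ ht, ht', h1]; module
    refine ⟨_, ?_, ?_, hx⟩
    · by_contra! hle
      set l := (t - t1) / (t2 - t1)
      have h1l : 0 < 1 - l := by linarith
      apply frontier_not_mem hop hp
      have := between_mem hop hcv hxΩ hcq (t := -l / (1 - l))
        (div_nonneg (by linarith) h1l.le) (by rw [div_lt_one h1l]; linarith)
      convert this using 1
      rw [hx]
      match_scalars <;> field_simp <;> ring
    · by_contra! hle
      set l := (t - t1) / (t2 - t1)
      have h1l : 0 < l := by linarith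
      apply frontier_not_mem hop hq
      have := between_mem hop hcv hxΩ hcp (t := (l - 1) / l)
        (div_nonneg (by linarith) h1l.le) (by rw [div_lt_one h1l]; linarith)
      convert this using 1
      rw [hx]
      match_scalars <;> field_simp <;> ring
  refine ⟨key x, ?_⟩
  rintro ⟨t, ht0, ht1, rfl⟩
  refine ⟨⟨t1 + t * (t2 - t1), by rw [h1, h2]; module⟩, ?_⟩
  obtain ⟨x0, hx0⟩ := hne
  obtain ⟨t0, h00, h01, e0⟩ := key x0 hx0
  rcases le_total t0 t with h | h
  · have := between_mem hop hcv hx0.2 hcq (t := (t - t0) / (1 - t0))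
      (div_nonneg (by linarith) (by linarith)) (by rw [div_lt_one (by linarith)]; linarith)
    convert this using 1
    have : 1 - t0 ≠ 0 := by linarith
    rw [e0]
    match_scalars <;> field_simp <;> ring
  · have := between_mem hop hcv hx0.2 hcp (t := (t0 - t) / t0)
      (div_nonneg (by linarith) (by linarith)) (by rw [div_lt_one (by linarith)]; linarith)
    convert this using 1
    rw [e0]
    match_scalars <;> field_simp <;> ring

/-! ### Directions of faces -/

/-- From a relative interior point of `F` one can move slightly in each direction of the affine
span of `F` without leaving `F`. -/
lemma exists_move {F : Set (Euc n)} {p u : Euc n} (hp : p ∈ intrinsicInterior ℝ F)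
    (hu : u ∈ vectorSpan ℝ F) : ∃ ε > 0, ∀ δ : ℝ, |δ| < ε → p + δ • u ∈ F := by
  obtain ⟨y, hy, rfl⟩ := hp
  let γ : ℝ → affineSpan ℝ F := fun δ => ⟨(y : Euc n) + δ • u, by
    have := AffineSubspace.vadd_mem_of_mem_direction
      (s := affineSpan ℝ F) (v := δ • u)
      (by rw [direction_affineSpan]; exact Submodule.smul_mem _ _ hu) y.2
    simpa [add_comm] using this⟩
  have hγ : Continuous γ := by
    apply Continuous.subtype_mk
    fun_prop
  have h0 : γ 0 = y := by ext1; simp [γ]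
  have : γ ⁻¹' interior ((↑) ⁻¹' F) ∈ nhds (0 : ℝ) :=
    (isOpen_interior.preimage hγ).mem_nhds (by rw [mem_preimage, h0]; exact hy)
  obtain ⟨ε, hε, hball⟩ := Metric.mem_nhds_iff.1 this
  refine ⟨ε, hε, fun δ hδ => ?_⟩
  have : δ ∈ γ ⁻¹' interior ((↑) ⁻¹' F) := hball (by simpa using hδ)
  exact (interior_subset this : γ δ ∈ ((↑) ⁻¹' F : Set (affineSpan ℝ F)))

/-- A functional supporting `Ω` at a relative interior point of a face is constant along the
face. -/
lemma Supports.vanish {F : Set (Euc n)} {p u : Euc n} {ψ : Euc n →L[ℝ] ℝ}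
    (hFc : F ⊆ closure Ω) (hψ : Supports Ω ψ p) (hp : p ∈ intrinsicInterior ℝ F)
    (hu : u ∈ vectorSpan ℝ F) : ψ u = 0 := by
  obtain ⟨ε, hε, h⟩ := exists_move hp hu
  have h1 := hψ.le (hFc (h (ε / 2) (by rw [abs_of_pos] <;> linarith)))
  have h2 := hψ.le (hFc (h (-(ε / 2)) (by rw [abs_neg, abs_of_pos] <;> linarith)))
  simp only [map_add, map_smul, smul_eq_mul] at h1 h2
  nlinarith

/-- The obstruction to rigidity of the line from `p` to `q`: a nonzero direction `u` of `F` that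
agrees modulo `q - p` with a direction of `F'`. -/
def Obstructed (F F' : Set (Euc n)) (p q : Euc n) : Prop :=
  ∃ u ∈ vectorSpan ℝ F, ∃ v ∈ vectorSpan ℝ F', ∃ t : ℝ, u ≠ 0 ∧ u = v + t • (q - p)

/-- Replacing the endpoints changes `q - p` by a direction of `F'` minus a direction of `F`, which
can be absorbed into `v` and `u`. -/
lemma Obstructed.transfer {F F' : Set (Euc n)} {p q p' q' : Euc n}
    (h : Obstructed F F' p q) (hp : p' - p ∈ vectorSpan ℝ F) (hq : q' - q ∈ vectorSpan ℝ F')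
    (hqp : q' - p' ∉ vectorSpan ℝ F') : Obstructed F F' p' q' := by
  obtain ⟨u, hu, v, hv, t, hu0, e⟩ := h
  have e' : u - t • (p' - p) = (v - t • (q' - q)) + t • (q' - p') := by rw [e]; module
  have hv' := Submodule.sub_mem _ hv (Submodule.smul_mem _ t hq)
  refine ⟨_, Submodule.sub_mem _ hu (Submodule.smul_mem _ t hp), _, hv', t, ?_, e'⟩
  intro h0
  by_cases ht : t = 0
  · subst ht; simp at h0; exact hu0 h0
  apply hqp
  rw [h0] at e'
  have : t • (q' - p') = -(v - t • (q' - q)) := by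
    rw [eq_neg_iff_add_eq_zero, add_comm]; exact e'.symm
  rw [← Submodule.smul_mem_iff _ ht, this]
  exact Submodule.neg_mem _ hv'

/-! ### Failure of rigidity is equivalent to the obstruction -/

/-- A point `z` off the segment `[a,b]` with equality in the triangle inequality yields an
obstruction: the four endpoints of the lines `az` and `zb` lie in `F` and `F'`. -/
lemma obstructed_of_eq (hop : IsOpen Ω) (hbd : Bornology.IsBounded Ω) (hcv : Convex ℝ Ω)
    {F F' : Set (Euc n)} (hF : IsExtreme ℝ (closure Ω) F) (hF' : IsExtreme ℝ (closure Ω) F')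
    {p q : Euc n} (hp : p ∈ frontier Ω) (hq : q ∈ frontier Ω)
    (hpF : p ∈ F) (hqF : q ∈ F') {l m : ℝ} (h0 : 0 < l) (hlm : l < m) (h1 : m < 1)
    {a b z : Euc n} (ea : a = p + l • (q - p)) (eb : b = p + m • (q - p))
    (ha : a ∈ Ω) (hb : b ∈ Ω) (hz : z ∈ Ω) (hpq : p ≠ q) (hzn : z ∉ segment ℝ a b)
    (heq : hilbertDist Ω a z + hilbertDist Ω z b = hilbertDist Ω a b) :
    Obstructed F F' p q := by
  have haz : a ≠ z := by rintro rfl; exact hzn (left_mem_segment _ _ _)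
  have hzb : z ≠ b := by rintro rfl; exact hzn (right_mem_segment _ _ _)
  have hab : a ≠ b := by
    rintro rfl
    have : (m - l) • (q - p) = 0 := by
      rw [ea] at eb; rw [sub_smul, sub_eq_zero]; exact (add_left_cancel eb).symm
    rcases smul_eq_zero.1 this with h | h
    · linarith
    · exact hpq (sub_eq_zero.1 h).symm
  obtain ⟨φ, hφ⟩ := exists_supports hop hcv hq
  obtain ⟨ψ, hψ⟩ := exists_supports hop hcv hp
  obtain ⟨s1, r1, hs1, hr1, hα1, hβ1⟩ := exists_params hop hbd ha hz haz
  obtain ⟨s2, r2, hs2, hr2, hα2, hβ2⟩ := exists_params hop hbd hz hb hzb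
  have hml : m - l ≠ 0 := by linarith
  have ep : a + (l / (m - l)) • (a - b) = p := by
    rw [ea, eb]; match_scalars <;> field_simp <;> ring
  have eq' : b + ((1 - m) / (m - l)) • (b - a) = q := by
    rw [ea, eb]; match_scalars <;> field_simp <;> ring
  obtain ⟨-, I0⟩ := pot_le hop hcv hφ hψ ha hb hab (s := l / (m - l)) (r := (1 - m) / (m - l))
    (div_pos h0 (by linarith)) (div_pos (by linarith) (by linarith)) (by rwa [ep]) (by rwa [eq'])
  have J0 := I0.2 ⟨by rw [eq'], by rw [ep]⟩
  obtain ⟨J1, I1⟩ := pot_le hop hcv hφ hψ ha hz haz hs1 hr1 hα1 hβ1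
  obtain ⟨J2, I2⟩ := pot_le hop hcv hφ hψ hz hb hzb hs2 hr2 hα2 hβ2
  obtain ⟨fβ1, gα1⟩ := I1.1 (by linarith)
  obtain ⟨fβ2, gα2⟩ := I2.1 (by linarith)
  have hφe : φ (q - p) ≠ 0 := by
    intro h
    have := hφ a ha
    rw [ea, map_add, map_smul, h] at this
    rw [map_sub] at h
    simp at this
    linarith
  have hψe : ψ (q - p) ≠ 0 := by
    intro h
    have := hψ a ha
    rw [ea, map_add, map_smul, h] at this
    simp at this
  -- On the line `pq`, the functionals take their supporting values only at the endpoints.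
  have onφ : ∀ c : ℝ, φ (p + c • (q - p)) = φ q → c = 1 := by
    intro c hc
    have : (c - 1) * φ (q - p) = 0 := by
      simp only [map_add, map_smul, map_sub, smul_eq_mul] at hc ⊢
      linarith
    rcases mul_eq_zero.1 this with h | h
    · linarith
    · exact (hφe h).elim
  have onψ : ∀ c : ℝ, ψ (p + c • (q - p)) = ψ p → c = 0 := by
    intro c hc
    have : c * ψ (q - p) = 0 := by
      simp only [map_add, map_smul, map_sub, smul_eq_mul] at hc ⊢
      linarith
    exact (mul_eq_zero.1 this).resolve_right hψe
  set α1 := a + s1 • (a - z) with dα1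
  set β1 := z + r1 • (z - a) with dβ1
  set α2 := z + s2 • (z - b) with dα2
  set β2 := b + r2 • (b - z) with dβ2
  -- The combinations of `β1, β2` and of `α1, α2` that cancel `z` lie on the line `pq`.
  have hqc : (r2 / (1 + r1 + r2)) • β1 + ((1 + r1) / (1 + r1 + r2)) • β2 = q := by
    set c := (-(r1 * r2) * l + (1 + r1) * (1 + r2) * m) / (1 + r1 + r2) with dc
    have e : (r2 / (1 + r1 + r2)) • β1 + ((1 + r1) / (1 + r1 + r2)) • β2 = p + c • (q - p) := by
      rw [dβ1, dβ2, ea, eb, dc]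
      match_scalars <;> field_simp <;> ring
    have hc := onφ c (by
      rw [← e, map_add, map_smul, map_smul, fβ1, fβ2, smul_eq_mul, smul_eq_mul]
      field_simp; ring)
    rw [e, hc]; module
  have hpc : ((1 + s2) / (1 + s1 + s2)) • α1 + (s1 / (1 + s1 + s2)) • α2 = p := by
    set c := ((1 + s1) * (1 + s2) * l - s1 * s2 * m) / (1 + s1 + s2) with dc
    have e : ((1 + s2) / (1 + s1 + s2)) • α1 + (s1 / (1 + s1 + s2)) • α2 = p + c • (q - p) := by
      rw [dα1, dα2, ea, eb, dc]
      match_scalars <;> field_simp <;> ring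
    have hc := onψ c (by
      rw [← e, map_add, map_smul, map_smul, gα1, gα2, smul_eq_mul, smul_eq_mul]
      field_simp; ring)
    rw [e, hc]; module
  have hα1F : α1 ∈ F := hF.2 (mem_closure_of_frontier hα1) (mem_closure_of_frontier hα2) hpF
    ⟨_, _, by positivity, by positivity, by field_simp; ring, hpc⟩
  have hβ1F : β1 ∈ F' := hF'.2 (mem_closure_of_frontier hβ1) (mem_closure_of_frontier hβ2) hqF
    ⟨_, _, by positivity, by positivity, by field_simp; ring, hqc⟩
  refine ⟨(1 + r1) • (α1 - p), Submodule.smul_mem _ _ (vsub_mem_vectorSpan ℝ hα1F hpF),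
    (-s1) • (β1 - q), Submodule.smul_mem _ _ (vsub_mem_vectorSpan ℝ hβ1F hqF),
    (1 + r1 + s1) * l - s1, ?_, ?_⟩
  · intro h
    have hα1p : α1 = p := by
      rcases smul_eq_zero.1 h with h | h
      · linarith
      · exact sub_eq_zero.1 h
    have hα2p : α2 = p := by
      rw [hα1p] at hpc
      have : (s1 / (1 + s1 + s2)) • (α2 - p) = 0 := by
        rw [smul_sub, sub_eq_zero]
        calc (s1 / (1 + s1 + s2)) • α2 = p - ((1 + s2) / (1 + s1 + s2)) • p := by
              rw [eq_sub_iff_add_eq, add_comm]; exact hpc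
          _ = _ := by match_scalars; field_simp; ring
      rcases smul_eq_zero.1 this with h | h
      · have : 0 < s1 / (1 + s1 + s2) := by positivity
        linarith
      · exact sub_eq_zero.1 h
    have hz1 : z = p + ((1 + s1) / s1 * l) • (q - p) := by
      have : s1 • z = s1 • (p + ((1 + s1) / s1 * l) • (q - p)) := by
        calc s1 • z = (1 + s1) • a - α1 := by rw [dα1]; module
          _ = _ := by rw [hα1p, ea]; match_scalars <;> field_simp <;> ring
      exact smul_right_injective _ hs1.ne' this
    have hz2 : z = p + (s2 / (1 + s2) * m) • (q - p) := by
      have : (1 + s2) • z = (1 + s2) • (p + (s2 / (1 + s2) * m) • (q - p)) := by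
        calc (1 + s2) • z = α2 + s2 • b := by rw [dα2]; module
          _ = _ := by rw [hα2p, eb]; match_scalars <;> field_simp <;> ring
      exact smul_right_injective _ (by positivity : (1 + s2 : ℝ) ≠ 0) this
    have hν : (1 + s1) / s1 * l = s2 / (1 + s2) * m := by
      have : ((1 + s1) / s1 * l - s2 / (1 + s2) * m) • (q - p) = 0 := by
        rw [sub_smul, sub_eq_zero]; exact add_left_cancel (hz1.symm.trans hz2)
      rcases smul_eq_zero.1 this with h | h
      · linarith
      · exact (hpq (sub_eq_zero.1 h).symm).elim
    have hν1 : l < (1 + s1) / s1 * l := by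
      have : 1 < (1 + s1) / s1 := by rw [lt_div_iff₀ hs1]; linarith
      nlinarith
    have hν2 : s2 / (1 + s2) * m < m := by
      have : s2 / (1 + s2) < 1 := by rw [div_lt_one (by linarith)]; linarith
      nlinarith
    set ν := (1 + s1) / s1 * l
    apply hzn
    refine ⟨(m - ν) / (m - l), (ν - l) / (m - l), div_nonneg (by linarith) (by linarith),
      div_nonneg (by linarith) (by linarith), by field_simp; ring, ?_⟩
    rw [hz1, ea, eb]
    match_scalars <;> field_simp <;> ring
  · rw [dα1, dβ1, ea]; module

/-- An obstruction produces a point off the line with equality in the triangle inequality: push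
the midpoint of two points of the line slightly in the direction `u`. -/
lemma not_rigid_of_obstructed (hop : IsOpen Ω) (hcv : Convex ℝ Ω)
    {F F' L : Set (Euc n)} (hF : F ⊆ closure Ω) (hF' : F' ⊆ closure Ω)
    {p q : Euc n} (hL : IsLineFromTo Ω L p q) (hpF : p ∈ intrinsicInterior ℝ F)
    (hqF : q ∈ intrinsicInterior ℝ F') (hob : Obstructed F F' p q) : ¬ IsRigidSet Ω L := by
  intro hrig
  obtain ⟨u, hu, v, hv, t, hu0, e⟩ := hob
  have hLΩ : L ⊆ Ω := by
    obtain ⟨⟨-, p0, d, -, rfl⟩, -⟩ := hL; exact inter_subset_right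
  have hmem := line_mem_iff hop hcv hL
  obtain ⟨-, hpq, hp, hq, -, -⟩ := hL
  obtain ⟨φ, hφ⟩ := exists_supports hop hcv hq
  obtain ⟨ψ, hψ⟩ := exists_supports hop hcv hp
  have φv := hφ.vanish hF' hqF hv
  have ψu := hψ.vanish hF hpF hu
  obtain ⟨ε1, hε1, m1⟩ := exists_move hpF hu
  obtain ⟨ε2, hε2, m2⟩ := exists_move hqF hv
  -- The endpoints constructed below are displaced by at most `6 ε` times `u` or `v`.
  obtain ⟨ε, hε, b1, b2, b3⟩ : ∃ ε : ℝ, 0 < ε ∧ 6 * ε < ε1 ∧ 6 * ε < ε2 ∧ |ε * t| < 1 / 8 := by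
    refine ⟨min (min (ε1 / 7) (ε2 / 7)) (1 / (8 * (|t| + 1))), by positivity, ?_, ?_, ?_⟩
    · have := (min_le_left (min (ε1 / 7) (ε2 / 7)) (1 / (8 * (|t| + 1)))).trans (min_le_left _ _)
      linarith
    · have := (min_le_left (min (ε1 / 7) (ε2 / 7)) (1 / (8 * (|t| + 1)))).trans (min_le_right _ _)
      linarith
    · have h := min_le_right (min (ε1 / 7) (ε2 / 7)) (1 / (8 * (|t| + 1)))
      have h0 : 0 < min (min (ε1 / 7) (ε2 / 7)) (1 / (8 * (|t| + 1))) := by positivity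
      rw [abs_mul, abs_of_pos h0]
      calc _ ≤ 1 / (8 * (|t| + 1)) * |t| := by gcongr
        _ < 1 / 8 := by
          rw [div_mul_eq_mul_div, div_lt_div_iff₀ (by positivity) (by norm_num)]
          linarith [abs_nonneg t]
  obtain ⟨b3l, b3r⟩ := abs_lt.1 b3
  set a := p + (1 / 4 : ℝ) • (q - p) with ea
  set b := p + (3 / 4 : ℝ) • (q - p) with eb
  set z := p + (1 / 2 : ℝ) • (q - p) + ε • u with ez
  have haL : a ∈ L := (hmem a).2 ⟨_, by norm_num, by norm_num, ea⟩
  have hbL : b ∈ L := (hmem b).2 ⟨_, by norm_num, by norm_num, eb⟩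
  have ha := hLΩ haL
  have hb := hLΩ hbL
  have ψe : ψ (q - p) ≠ 0 := by
    intro h
    have := hψ a ha
    rw [ea, map_add, map_smul, h] at this
    simp at this
  have hzline : ∀ k : ℝ, z ≠ p + k • (q - p) := by
    intro k hk
    have h1 : ε • u = (k - 1 / 2) • (q - p) := by
      rw [ez, add_assoc] at hk
      have := add_left_cancel hk
      rw [sub_smul, ← this]; module
    have h2 := congrArg ψ h1
    rw [map_smul, map_smul, ψu, smul_zero, smul_eq_mul] at h2
    have h3 := (mul_eq_zero.1 h2.symm).resolve_right ψe
    rw [h3, zero_smul] at h1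
    exact hu0 ((smul_eq_zero.1 h1).resolve_left hε.ne')
  have hza : a ≠ z := fun h => hzline _ (h.symm.trans ea)
  have hzb : z ≠ b := fun h => hzline _ (h.trans eb)
  have hab : a ≠ b := by
    intro h
    have : (1 / 2 : ℝ) • (q - p) = 0 := by
      calc (1 / 2 : ℝ) • (q - p) = b - a := by rw [ea, eb]; module
        _ = 0 := by rw [h, sub_self]
    rcases smul_eq_zero.1 this with h | h
    · norm_num at h
    · exact hpq (sub_eq_zero.1 h).symm
  set w := ε * t with hw
  have d1 : 0 < 1 / 4 + w := by linarith
  have d2 : 0 < 1 / 4 - w := by linarith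
  have hr1 : 0 < (1 / 2 - w) / (1 / 4 + w) := div_pos (by linarith) d1
  have hr2 : 0 < (1 / 4) / (1 / 4 - w) := div_pos (by norm_num) d2
  have eα1 : a + (1 : ℝ) • (a - z) = p + (-ε) • u := by rw [ea, ez]; module
  have eα2 : z + (2 : ℝ) • (z - b) = p + (3 * ε) • u := by rw [eb, ez]; module
  have eβ1 : z + ((1 / 2 - w) / (1 / 4 + w)) • (z - a) =
      q + ((3 / 4) / (1 / 4 + w) * ε) • v := by
    have h1 : (1 / 2 - w) / (1 / 4 + w) * (1 / 4 + w) = 1 / 2 - w := div_mul_cancel₀ _ d1.ne'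
    have h2 : 3 / 4 / (1 / 4 + w) = 1 + (1 / 2 - w) / (1 / 4 + w) := by
      rw [div_eq_iff d1.ne', add_mul, h1]; ring
    rw [h2]
    generalize (1 / 2 - w) / (1 / 4 + w) = r at h1 ⊢
    calc z + r • (z - a) = p + (1 / 2 + w + r * (1 / 4 + w)) • (q - p) + ((1 + r) * ε) • v := by
          rw [ea, ez, e, hw]; module
      _ = _ := by rw [h1]; module
  have eβ2 : b + ((1 / 4) / (1 / 4 - w)) • (b - z) =
      q + (-((1 / 4) / (1 / 4 - w) * ε)) • v := by
    have h1 : (1 / 4) / (1 / 4 - w) * (1 / 4 - w) = 1 / 4 := div_mul_cancel₀ _ d2.ne'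
    generalize (1 / 4) / (1 / 4 - w) = r at h1 ⊢
    calc b + r • (b - z) = p + (3 / 4 + r * (1 / 4 - w)) • (q - p) + (-(r * ε)) • v := by
          rw [eb, ez, e, hw]; module
      _ = _ := by rw [h1]; module
  have cβ1 : (3 / 4) / (1 / 4 + w) * ε < 6 * ε + (ε2 - 6 * ε) := by
    have : (3 / 4) / (1 / 4 + w) ≤ 6 := by rw [div_le_iff₀ d1]; linarith
    nlinarith
  have cβ2 : (1 / 4) / (1 / 4 - w) * ε < 6 * ε + (ε2 - 6 * ε) := by
    have : (1 / 4) / (1 / 4 - w) ≤ 6 := by rw [div_le_iff₀ d2]; linarith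
    nlinarith
  have fr1 : a + (1 : ℝ) • (a - z) ∈ frontier Ω ∧ ψ (a + (1 : ℝ) • (a - z)) = ψ p := by
    have h : ψ (a + (1 : ℝ) • (a - z)) = ψ p := by rw [eα1, map_add, map_smul, ψu]; simp
    exact ⟨hψ.frontier hop (by
      rw [eα1]; exact hF (m1 _ (by rw [abs_neg, abs_of_pos hε]; linarith))) h, h⟩
  have fr2 : z + (2 : ℝ) • (z - b) ∈ frontier Ω ∧ ψ (z + (2 : ℝ) • (z - b)) = ψ p := by
    have h : ψ (z + (2 : ℝ) • (z - b)) = ψ p := by rw [eα2, map_add, map_smul, ψu]; simp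
    exact ⟨hψ.frontier hop (by
      rw [eα2]; exact hF (m1 _ (by rw [abs_of_pos (by positivity)]; linarith))) h, h⟩
  have fr3 : z + ((1 / 2 - w) / (1 / 4 + w)) • (z - a) ∈ frontier Ω ∧
      φ (z + ((1 / 2 - w) / (1 / 4 + w)) • (z - a)) = φ q := by
    have h : φ (z + ((1 / 2 - w) / (1 / 4 + w)) • (z - a)) = φ q := by
      rw [eβ1, map_add, map_smul, φv]; simp
    exact ⟨hφ.frontier hop (by
      rw [eβ1]; exact hF' (m2 _ (by rw [abs_of_pos (by positivity)]; linarith))) h, h⟩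
  have fr4 : b + ((1 / 4) / (1 / 4 - w)) • (b - z) ∈ frontier Ω ∧
      φ (b + ((1 / 4) / (1 / 4 - w)) • (b - z)) = φ q := by
    have h : φ (b + ((1 / 4) / (1 / 4 - w)) • (b - z)) = φ q := by
      rw [eβ2, map_add, map_smul, φv]; simp
    exact ⟨hφ.frontier hop (by
      rw [eβ2]
      exact hF' (m2 _ (by rw [abs_neg, abs_of_pos (by positivity)]; linarith))) h, h⟩
  have hz : z ∈ Ω := by
    set r := (1 / 2 - w) / (1 / 4 + w)
    have := between_mem hop hcv ha (mem_closure_of_frontier fr3.1) (t := 1 / (1 + r))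
      (by positivity) (by rw [div_lt_one (by linarith)]; linarith)
    convert this using 1
    have h1r : 1 + r ≠ 0 := by positivity
    clear_value r z a
    match_scalars <;> field_simp <;> ring
  have ep : a + (1 / 2 : ℝ) • (a - b) = p := by rw [ea, eb]; module
  have eq' : b + (1 / 2 : ℝ) • (b - a) = q := by rw [ea, eb]; module
  have J1 := (pot_le hop hcv hφ hψ ha hz hza one_pos hr1 fr1.1 fr3.1).2.2 ⟨fr3.2, fr1.2⟩
  have J2 := (pot_le hop hcv hφ hψ hz hb hzb two_pos hr2 fr2.1 fr4.1).2.2 ⟨fr4.2, fr2.2⟩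
  have J0 := (pot_le hop hcv hφ hψ ha hb hab (s := 1 / 2) (r := 1 / 2) (by norm_num)
    (by norm_num) (by rwa [ep]) (by rwa [eq'])).2.2 ⟨by rw [eq'], by rw [ep]⟩
  obtain ⟨c, c', -, -, hc, hseg⟩ := hrig a haL b hbL z hz (by linarith)
  apply hzline (c * (1 / 4) + c' * (3 / 4))
  obtain rfl : c = 1 - c' := by linarith
  rw [← hseg, ea, eb]; module

/-- Let `Ω ⊆ ℝⁿ` be an open bounded convex set with its Hilbert metric
and let `I, I'` be the relative interiors of two proper faces of the closure of `Ω`.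
If some line in `Ω` with one accumulation point in `I` and the other in `I'` is rigid,
then every such line is rigid. -/
theorem stmt_15 {n : ℕ} (Ω : Set (Euc n))
    (hne : Ω.Nonempty) (hop : IsOpen Ω) (hbd : Bornology.IsBounded Ω) (hcv : Convex ℝ Ω)
    (F F' : Set (Euc n)) (hF : IsProperFace (closure Ω) F)
    (hF' : IsProperFace (closure Ω) F')
    (hrigid : ∃ (L : Set (Euc n)) (a b : Euc n), IsLineFromTo Ω L a b ∧
      a ∈ intrinsicInterior ℝ F ∧ b ∈ intrinsicInterior ℝ F' ∧ IsRigidSet Ω L) :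
    ∀ (L : Set (Euc n)) (a b : Euc n), IsLineFromTo Ω L a b →
      a ∈ intrinsicInterior ℝ F → b ∈ intrinsicInterior ℝ F' → IsRigidSet Ω L := by
  intro L p q hL hpF hqF
  obtain ⟨L₀, p₀, q₀, hL₀, hp₀F, hq₀F, hrig⟩ := hrigid
  have hFc : F ⊆ closure Ω := hF.1.2.1
  have hFc' : F' ⊆ closure Ω := hF'.1.2.1
  have hmem := line_mem_iff hop hcv hL
  have hLΩ : L ⊆ Ω := by
    obtain ⟨⟨-, p0, d, -, rfl⟩, -⟩ := hL; exact inter_subset_right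
  have hsub := intrinsicInterior_subset (𝕜 := ℝ) (s := F)
  have hsub' := intrinsicInterior_subset (𝕜 := ℝ) (s := F')
  have hno : ¬ Obstructed F F' p q := by
    intro hob
    refine not_rigid_of_obstructed hop hcv hFc hFc' hL₀ hp₀F hq₀F (hob.transfer
      (vsub_mem_vectorSpan ℝ (hsub hp₀F) (hsub hpF))
      (vsub_mem_vectorSpan ℝ (hsub' hq₀F) (hsub' hqF)) ?_) hrig
    intro h
    obtain ⟨φ, hφ⟩ := exists_supports hop hcv hL₀.2.2.2.1
    have h0 := hφ.vanish hFc' hq₀F h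
    obtain ⟨x, hx⟩ := hL₀.1.1
    obtain ⟨t, -, -, rfl⟩ := (line_mem_iff hop hcv hL₀ x).1 hx
    have hxΩ : p₀ + t • (q₀ - p₀) ∈ Ω := by
      obtain ⟨⟨-, p0, d, -, rfl⟩, -⟩ := hL₀; exact hx.2
    have h1 := hφ _ hxΩ
    rw [map_add, map_smul, h0] at h1
    rw [map_sub] at h0
    simp at h1
    linarith
  obtain ⟨-, hpq, hp, hq, -, -⟩ := hL
  intro a haL b hbL z hz heq
  have ha := hLΩ haL
  have hb := hLΩ hbL
  obtain ⟨l, hl0, hl1, ea⟩ := (hmem a).1 haL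
  obtain ⟨m, hm0, hm1, eb⟩ := (hmem b).1 hbL
  by_contra hzn
  rcases lt_trichotomy l m with h | h | h
  · exact hno (obstructed_of_eq hop hbd hcv hF.1.2 hF'.1.2 hp hq (hsub hpF) (hsub' hqF)
      hl0 h hm1 ea eb ha hb hz hpq hzn heq)
  · have hab : b = a := by rw [ea, eb, h]
    subst hab
    have hbz : b ≠ z := by rintro rfl; exact hzn (left_mem_segment _ _ _)
    rw [hilbertDist_self] at heq
    linarith [hilbertDist_pos hop hbd hcv hb hz hbz, hilbertDist_pos hop hbd hcv hz hb hbz.symm]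
  · refine hno (obstructed_of_eq hop hbd hcv hF.1.2 hF'.1.2 hp hq (hsub hpF) (hsub' hqF)
      hm0 h hl1 eb ea hb ha hz hpq (by rwa [segment_symm]) ?_)
    rw [hilbertDist_comm hop hbd hcv hb hz, hilbertDist_comm hop hbd hcv hz ha,
      hilbertDist_comm hop hbd hcv hb ha, add_comm]
    exact heq
end
end

section
/- Let n ≥ 2 and let f: ℝⁿ → ℝⁿ be a continuous function such that (1) f(0) = 0, (2) for every i ∈ {1,…,n}, f maps every line in ℝⁿ parallel to the i-th coordinate axis onto a line parallel to the i-th coordinate axis, and (3) f maps every line parallel to the line t ↦ (t,…,t) onto a line parallel to the line t ↦ (t,…,t). Then there exists a nonzero real number k such that f(x) = k·x for all x ∈ ℝⁿ. -/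
/-!
Moving along the `j`-th axis does not change the `i`-th coordinate of the image for `j ≠ i`, so
`f x i` depends on `x i` only (`coord_eq_of_axes`). The diagonal through `0` shows that the
resulting one-variable functions all coincide with a single `g`, and the diagonal through
`s • e₀` gives `g (s + t) - g s = g t - g 0`. Hence `g` is additive and continuous, so
`g t = t * g 1`; the factor `g 1` is nonzero because a line is not a point.
-/

open Set
open scoped LinearAlgebra.Projectivization
open scoped Classical

noncomputable section

/-- Two points on a line with direction `v` have images differing by a multiple of `v`. -/
lemma exists_image_sub_smul {n : ℕ} {f : (Fin n → ℝ) → (Fin n → ℝ)} {v : Fin n → ℝ}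
    (h : ∀ a : Fin n → ℝ, ∃ b : Fin n → ℝ,
      f '' {x | ∃ t : ℝ, x = a + t • v} = {x | ∃ t : ℝ, x = b + t • v})
    (a : Fin n → ℝ) (t : ℝ) : ∃ c : ℝ, f (a + t • v) = f a + c • v := by
  obtain ⟨b, hb⟩ := h a
  have h1 : f (a + t • v) ∈ {x | ∃ t : ℝ, x = b + t • v} := hb ▸ ⟨_, ⟨t, rfl⟩, rfl⟩
  have h2 : f a ∈ {x | ∃ t : ℝ, x = b + t • v} := hb ▸ ⟨_, ⟨0, by simp⟩, rfl⟩
  obtain ⟨t1, h1⟩ := h1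
  obtain ⟨t2, h2⟩ := h2
  exact ⟨t1 - t2, by rw [h1, h2]; module⟩

/-- If `f` respects the directions of all coordinate axes, then the `i`-th coordinate of `f x`
depends only on `x i`. -/
lemma coord_eq_of_axes {n : ℕ} {f : (Fin n → ℝ) → (Fin n → ℝ)}
    (h : ∀ (i : Fin n) (a : Fin n → ℝ) (t : ℝ), ∃ c : ℝ,
      f (a + t • (Pi.single i 1 : Fin n → ℝ)) = f a + c • (Pi.single i 1 : Fin n → ℝ))
    (i : Fin n) (x y : Fin n → ℝ) (hxy : x i = y i) : f x i = f y i := by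
  -- The coordinates of `x` in `s` are replaced by those of `y`, one axis at a time.
  have key : ∀ s : Finset (Fin n), f (s.piecewise y x) i = f x i := by
    intro s
    induction s using Finset.induction_on with
    | empty => simp
    | insert j s hj ih =>
      rw [Finset.piecewise_insert, ← ih]
      by_cases hji : j = i
      · subst hji
        rw [← hxy, Function.update_eq_self_iff.2]
        simp [hj]
      · obtain ⟨c, hc⟩ := h j (s.piecewise y x) (y j - s.piecewise y x j)
        have e : s.piecewise y x + (y j - s.piecewise y x j) • (Pi.single j 1 : Fin n → ℝ)
            = Function.update (s.piecewise y x) j (y j) := by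
          ext l
          by_cases hl : l = j
          · subst hl
            simp
          · simp [hl]
        rw [← e, hc]
        simp [Ne.symm hji]
  simpa using (key Finset.univ).symm

/-- Let `n ≥ 2` and let `f : ℝⁿ → ℝⁿ` be continuous with `f(0) = 0`,
mapping every line parallel to the `i`-th coordinate axis onto a line parallel to the
`i`-th coordinate axis (for every `i`), and mapping every line parallel to the diagonal
`t ↦ (t,…,t)` onto a line parallel to the diagonal. Then `f(x) = k·x` for some nonzero
real number `k`. -/
theorem stmt_16 (n : ℕ) (hn : 2 ≤ n) (f : (Fin n → ℝ) → (Fin n → ℝ))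
    (hcont : Continuous f) (h0 : f 0 = 0)
    (haxes : ∀ (i : Fin n) (a : Fin n → ℝ), ∃ b : Fin n → ℝ,
      f '' {x | ∃ t : ℝ, x = a + t • (Pi.single i 1 : Fin n → ℝ)} =
        {x | ∃ t : ℝ, x = b + t • (Pi.single i 1 : Fin n → ℝ)})
    (hdiag : ∀ a : Fin n → ℝ, ∃ b : Fin n → ℝ,
      f '' {x | ∃ t : ℝ, x = a + t • ((fun _ => 1) : Fin n → ℝ)} =
        {x | ∃ t : ℝ, x = b + t • ((fun _ => 1) : Fin n → ℝ)}) :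
    ∃ k : ℝ, k ≠ 0 ∧ ∀ x : Fin n → ℝ, f x = k • x := by
  have hax := fun i => exists_image_sub_smul (haxes i)
  have hdg := exists_image_sub_smul hdiag
  have dep := coord_eq_of_axes hax
  let i0 : Fin n := ⟨0, by omega⟩
  let i1 : Fin n := ⟨1, by omega⟩
  have hne : i1 ≠ i0 := by simp [i0, i1]
  let g : ℝ → ℝ := fun t => f (fun _ => t) i0
  have hfg : ∀ x i, f x i = g (x i) := by
    intro x i
    obtain ⟨c, hc⟩ := hdg 0 (x i)
    have e : (0 : Fin n → ℝ) + x i • (fun _ => 1 : Fin n → ℝ) = fun _ => x i := by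
      ext; simp
    rw [e, h0] at hc
    rw [dep i x (fun _ => x i) rfl]
    simp [g, hc]
  have g0 : g 0 = 0 := by
    have := hfg 0 i0
    simpa [h0] using this.symm
  have gadd : ∀ s t, g (s + t) = g s + g t := by
    intro s t
    obtain ⟨c, hc⟩ := hdg (Pi.single i0 s) t
    have e0 := congrFun hc i0
    have e1 := congrFun hc i1
    simp [hfg, hne, g0] at e0 e1
    rw [e0, e1]
  have gcont : Continuous g := by fun_prop
  let G : ℝ →+ ℝ := ⟨⟨g, g0⟩, gadd⟩
  have glin : ∀ t, g t = g 1 * t := by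
    intro t
    have := map_real_smul G gcont t 1
    simp only [smul_eq_mul, mul_one] at this
    exact this.trans (mul_comm _ _)
  have hf : ∀ x : Fin n → ℝ, f x = g 1 • x := by
    intro x
    ext i
    rw [hfg, glin]
    rfl
  refine ⟨g 1, fun hk => ?_, hf⟩
  -- If `g 1 = 0` then `f = 0`, but the image of the diagonal contains `b` and `b + (1,…,1)`.
  obtain ⟨b, hb⟩ := hdiag 0
  have hz : ∀ y ∈ {x | ∃ t : ℝ, x = b + t • ((fun _ => 1) : Fin n → ℝ)}, y = 0 := by
    rw [← hb]
    rintro _ ⟨x, -, rfl⟩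
    rw [hf, hk, zero_smul]
  have z0 := congrFun (hz _ ⟨0, rfl⟩) i0
  have z1 := congrFun (hz _ ⟨1, rfl⟩) i0
  simp at z0 z1
  linarith
end
end
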